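/- Let ψ : Ω → ℝ be an eigenvector of H with eigenvalue E and set E' := E + K. Then for every function S : Ω → ℝ, Σ_{α∈Ω} ψ(α)²·e^{2S(α)}·[ 1/u(α) − E' − (t/2)·Σ_{β adjacent to α} (e^{S(β)−S(α)} − 1)² ] ≤ 0. (Lemma IV.1: the discrete Agmon inequality on the Fock-space graph, valid for an arbitrary weight function S.) -/

import Mathlib

open Matrix Finset

/-!
For a symmetric matrix `A` the quadratic form localizes as
`⟨wψ, A wψ⟩ = ⟨w²ψ, Aψ⟩ - ½ ∑ᵢⱼ Aᵢⱼ ψᵢ ψⱼ (wᵢ - wⱼ)²`,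
and only off-diagonal entries contribute to the double sum. If these are nonpositive, two choices of
`(ψ, w)` give the theorem. Taking `(u, φ / u)` with `u > 0`, the double sum has a sign, whence
`∑ᵢ φᵢ² (Au)ᵢ / uᵢ ≤ ⟨φ, Aφ⟩`. Applying this to `φ = wψ` with `w = exp S`, and expanding the
right-hand side by the same formula for `(ψ, w)`, leaves a double sum that is controlled by
`2 ψᵢ ψⱼ ≤ ψᵢ² + ψⱼ²`.
-/

section SymmetricMatrix

variable {ι R : Type*} {A : Matrix ι ι R}

theorem apply_mul_sub_sq_nonpos [CommRing R] [LinearOrder R] [IsOrderedRing R]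
    (hoff : ∀ i j, i ≠ j → A i j ≤ 0) (w : ι → R) (i j : ι) :
    A i j * (w i - w j) ^ 2 ≤ 0 := by
  rcases eq_or_ne i j with rfl | hij
  · simp
  · exact mul_nonpos_of_nonpos_of_nonneg (hoff i j hij) (sq_nonneg _)

variable [Fintype ι]

theorem sum_sum_apply_mul_comm [NonUnitalNonAssocSemiring R] (hA : A.IsSymm) (f : ι → ι → R) :
    ∑ i, ∑ j, A i j * f i j = ∑ i, ∑ j, A i j * f j i := by
  rw [sum_comm]
  simp only [hA.apply]

theorem two_mul_dotProduct_mulVec_mul [CommRing R] (hA : A.IsSymm) (w ψ : ι → R) :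
    2 * ((w * ψ) ⬝ᵥ A *ᵥ (w * ψ)) =
      2 * ((w ^ 2 * ψ) ⬝ᵥ A *ᵥ ψ) - ∑ i, ∑ j, A i j * (ψ i * ψ j * (w i - w j) ^ 2) := by
  have form_eq (φ χ : ι → R) : φ ⬝ᵥ A *ᵥ χ = ∑ i, ∑ j, A i j * (φ i * χ j) := by
    simp only [dotProduct, mulVec, mul_sum, mul_left_comm]
  have symmetrized : 2 * ((w ^ 2 * ψ) ⬝ᵥ A *ᵥ ψ) =
      ∑ i, ∑ j, A i j * (ψ i * ψ j * (w i ^ 2 + w j ^ 2)) := by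
    rw [two_mul]
    nth_rw 2 [form_eq]
    rw [sum_sum_apply_mul_comm hA, form_eq]
    simp only [← sum_add_distrib, Pi.mul_apply, Pi.pow_apply]
    exact sum_congr rfl fun i _ => sum_congr rfl fun j _ => by ring
  rw [symmetrized, form_eq]
  simp only [← sum_sub_distrib, mul_sum, Pi.mul_apply]
  exact sum_congr rfl fun i _ => sum_congr rfl fun j _ => by ring

theorem sum_sum_sq_mul_sub_sq_le [CommRing R] [LinearOrder R] [IsStrictOrderedRing R]
    (hA : A.IsSymm) (hoff : ∀ i j, i ≠ j → A i j ≤ 0) (w ψ : ι → R) :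
    ∑ i, ∑ j, A i j * (ψ i ^ 2 * (w i - w j) ^ 2) ≤
      ∑ i, ∑ j, A i j * (ψ i * ψ j * (w i - w j) ^ 2) := by
  have swap := sum_sum_apply_mul_comm hA fun i j => ψ i ^ 2 * (w i - w j) ^ 2
  have symmetrized : ∑ i, ∑ j, A i j * (ψ i ^ 2 * (w i - w j) ^ 2) +
      ∑ i, ∑ j, A i j * (ψ j ^ 2 * (w j - w i) ^ 2) ≤
        2 * ∑ i, ∑ j, A i j * (ψ i * ψ j * (w i - w j) ^ 2) := by
    simp only [← sum_add_distrib, mul_sum]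
    refine sum_le_sum fun i _ => sum_le_sum fun j _ => ?_
    have := mul_nonpos_of_nonpos_of_nonneg (apply_mul_sub_sq_nonpos hoff w i j)
      (sq_nonneg (ψ i - ψ j))
    linarith
  linarith

section OrderedField

variable [Field R] [LinearOrder R] [IsStrictOrderedRing R]

theorem sum_sq_mul_mulVec_div_le_dotProduct_mulVec (hA : A.IsSymm)
    (hoff : ∀ i j, i ≠ j → A i j ≤ 0) {u : ι → R} (hu : ∀ i, 0 < u i) (φ : ι → R) :
    ∑ i, φ i ^ 2 * ((A *ᵥ u) i / u i) ≤ φ ⬝ᵥ A *ᵥ φ := by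
  have hφ : φ / u * u = φ := funext fun i => div_mul_cancel₀ _ (hu i).ne'
  have localization := two_mul_dotProduct_mulVec_mul hA (φ / u) u
  rw [hφ] at localization
  have main_term : ((φ / u) ^ 2 * u) ⬝ᵥ A *ᵥ u = ∑ i, φ i ^ 2 * ((A *ᵥ u) i / u i) := by
    refine sum_congr rfl fun i _ => ?_
    have := (hu i).ne'
    simp only [Pi.mul_apply, Pi.pow_apply, Pi.div_apply]
    field_simp
  have remainder_nonpos :
      ∑ i, ∑ j, A i j * (u i * u j * ((φ / u) i - (φ / u) j) ^ 2) ≤ 0 := by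
    refine sum_nonpos fun i _ => sum_nonpos fun j _ => ?_
    rw [mul_left_comm]
    exact mul_nonpos_of_nonneg_of_nonpos (mul_pos (hu i) (hu j)).le
      (apply_mul_sub_sq_nonpos hoff (φ / u) i j)
  linarith

theorem sum_sq_mul_mulVec_div_le_of_weight (hA : A.IsSymm) (hoff : ∀ i j, i ≠ j → A i j ≤ 0)
    {u : ι → R} (hu : ∀ i, 0 < u i) (w ψ : ι → R) :
    ∑ i, (w i * ψ i) ^ 2 * ((A *ᵥ u) i / u i) ≤
      (w ^ 2 * ψ) ⬝ᵥ A *ᵥ ψ - 1 / 2 * ∑ i, ∑ j, A i j * (ψ i ^ 2 * (w i - w j) ^ 2) := by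
  have lower := sum_sq_mul_mulVec_div_le_dotProduct_mulVec hA hoff hu (w * ψ)
  have localization := two_mul_dotProduct_mulVec_mul hA w ψ
  have remainder := sum_sum_sq_mul_sub_sq_le hA hoff w ψ
  simp only [Pi.mul_apply] at lower
  linarith

end OrderedField

end SymmetricMatrix

/-- The tight-binding Hamiltonian on the vertices of `G` with potential `V`, in which every edge
carries the hopping amplitude `t`, entering with a minus sign. -/
def hoppingHamiltonian {Ω R : Type*} [DecidableEq Ω] [Ring R] (G : SimpleGraph Ω)
    [DecidableRel G.Adj] (t : R) (V : Ω → R) : Matrix Ω Ω R :=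
  diagonal V - t • G.adjMatrix R

namespace hoppingHamiltonian

variable {Ω R : Type*} [DecidableEq Ω] (G : SimpleGraph Ω) [DecidableRel G.Adj]

theorem eq_of_apply [Ring R] {t : R} {V : Ω → R} {H : Matrix Ω Ω R}
    (hH : ∀ α β, H α β = if α = β then V α else if G.Adj α β then -t else 0) :
    H = hoppingHamiltonian G t V := by
  ext α β
  rcases eq_or_ne α β with rfl | hαβ
  · simp [hH, hoppingHamiltonian]
  · by_cases hadj : G.Adj α β <;> simp [hH, hoppingHamiltonian, hαβ, hadj]

theorem isSymm [Ring R] (t : R) (V : Ω → R) : (hoppingHamiltonian G t V).IsSymm :=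
  (isSymm_diagonal V).sub ((G.isSymm_adjMatrix (α := R)).smul t)

theorem add_smul_one [Ring R] (t : R) (V : Ω → R) (K : R) :
    hoppingHamiltonian G t V + K • 1 = hoppingHamiltonian G t fun α => V α + K := by
  rw [hoppingHamiltonian, hoppingHamiltonian, smul_one_eq_diagonal, sub_add_eq_add_sub,
    diagonal_add]

theorem apply_nonpos_of_ne [Ring R] [PartialOrder R] [IsOrderedRing R] {t : R} (ht : 0 ≤ t)
    (V : Ω → R) (α β : Ω) (hαβ : α ≠ β) : hoppingHamiltonian G t V α β ≤ 0 := by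
  by_cases hadj : G.Adj α β <;> simp [hoppingHamiltonian, hαβ, hadj, ht]

theorem sum_apply_mul [Fintype Ω] [Ring R] (t : R) (V f : Ω → R) (α : Ω) :
    ∑ β, hoppingHamiltonian G t V α β * f β =
      V α * f α - t * ∑ β ∈ G.neighborFinset α, f β := by
  change (hoppingHamiltonian G t V *ᵥ f) α = _
  simp [hoppingHamiltonian, sub_mulVec, mulVec_diagonal, smul_mulVec]

end hoppingHamiltonian

theorem mulVec_eq_of_eq_nonsing_inv_mulVec {n R : Type*} [Fintype n] [DecidableEq n] [CommRing R]
    {A : Matrix n n R} {u b : n → R} (hu : u = A⁻¹ *ᵥ b) (hu₀ : u ≠ 0) : A *ᵥ u = b := by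
  -- `A⁻¹` is the junk value `0` for singular `A`.
  have hdet : IsUnit A.det := by
    contrapose! hu₀
    rw [hu, nonsing_inv_apply_not_isUnit A hu₀, zero_mulVec]
  rw [hu, mulVec_mulVec, mul_nonsing_inv A hdet, one_mulVec]

theorem mbll_agmon_inequality_general {ι : Type*} [Fintype ι] {A : Matrix ι ι ℝ}
    (hA : A.IsSymm) (hoff : ∀ i j, i ≠ j → A i j ≤ 0) {u : ι → ℝ} (hu : ∀ i, 0 < u i)
    {ψ : ι → ℝ} {E : ℝ} (hψ : A *ᵥ ψ = E • ψ) (S : ι → ℝ) :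
    ∑ i, ψ i ^ 2 * Real.exp (2 * S i) *
      ((A *ᵥ u) i / u i - E + 1 / 2 * ∑ j, A i j * (Real.exp (S j - S i) - 1) ^ 2) ≤ 0 := by
  set w : ι → ℝ := fun i => Real.exp (S i)
  have exp_two_mul (i : ι) : Real.exp (2 * S i) = w i ^ 2 := by
    rw [← Real.exp_nat_mul, Nat.cast_ofNat]
  have weight_sub (i j : ι) : w i - w j = -(w i * (Real.exp (S j - S i) - 1)) := by
    rw [mul_sub_one, ← Real.exp_add, add_sub_cancel, neg_sub]
  have agmon := sum_sq_mul_mulVec_div_le_of_weight hA hoff hu w ψ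
  rw [hψ, ← sub_nonpos] at agmon
  refine le_of_eq_of_le ?_ agmon
  rw [dotProduct, mul_sum, ← sum_sub_distrib, ← sum_sub_distrib]
  refine sum_congr rfl fun i _ => ?_
  have inner_sum : ∑ j, A i j * (ψ i ^ 2 * (w i - w j) ^ 2) =
      ψ i ^ 2 * w i ^ 2 * ∑ j, A i j * (Real.exp (S j - S i) - 1) ^ 2 := by
    rw [mul_sum]
    exact sum_congr rfl fun j _ => by rw [weight_sub]; ring
  simp only [inner_sum, exp_two_mul, Pi.mul_apply, Pi.pow_apply, Pi.smul_apply, smul_eq_mul]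
  ring

/-- **Lemma IV.1 (discrete Agmon inequality)**: for every weight function `S : Ω → ℝ`,
`Σ_α ψ α² e^{2S α} [1/u α − E' − (t/2)·Σ_{β ~ α} (e^{S β − S α} − 1)²] ≤ 0`. -/
theorem mbll_agmon_inequality
    {Ω : Type*} [Fintype Ω] [DecidableEq Ω] [Nonempty Ω]
    (G : SimpleGraph Ω) [DecidableRel G.Adj] (hG : G.Connected)
    (t : ℝ) (ht : 0 < t) (V : Ω → ℝ) (K : ℝ)
    (H : Matrix Ω Ω ℝ)
    (hH : ∀ α β, H α β = if α = β then V α else if G.Adj α β then -t else 0)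
    (hK : ∀ α, 0 ≤ K + V α - t * (G.degree α + 1))
    (u : Ω → ℝ) (hu : u = (H + K • (1 : Matrix Ω Ω ℝ))⁻¹ *ᵥ (fun _ => 1))
    (hupos : ∀ α, 0 < u α)
    (ψ : Ω → ℝ) (E : ℝ) (hψ : H *ᵥ ψ = E • ψ)
    (E' : ℝ) (hE' : E' = E + K) :
    ∀ S : Ω → ℝ,
      ∑ α, ψ α ^ 2 * Real.exp (2 * S α) *
        (1 / u α - E' - t / 2 * ∑ β ∈ G.neighborFinset α, (Real.exp (S β - S α) - 1) ^ 2)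
      ≤ 0 := by
  intro S
  have u_ne_zero : u ≠ 0 := fun h => (hupos (Classical.arbitrary Ω)).ne' (congrFun h _)
  have landscape : (H + K • 1) *ᵥ u = fun _ => 1 :=
    mulVec_eq_of_eq_nonsing_inv_mulVec hu u_ne_zero
  have eigen : (H + K • 1) *ᵥ ψ = E' • ψ := by
    rw [add_mulVec, smul_mulVec, one_mulVec, hψ, hE', add_smul]
  rw [hoppingHamiltonian.eq_of_apply G hH, hoppingHamiltonian.add_smul_one] at landscape eigen
  have agmon := mbll_agmon_inequality_general (hoppingHamiltonian.isSymm G t _)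
    (hoppingHamiltonian.apply_nonpos_of_ne G ht.le _) hupos eigen S
  simp only [landscape, hoppingHamiltonian.sum_apply_mul] at agmon
  convert agmon using 4
  rw [sub_self, Real.exp_zero]
  ring
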